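/- Let z₁ < ⋯ < z_K (K ≥ 2) be a grid with Cramér projection Π_C. For any probability measure ν on ℝ supported on [z₁, z_K], the squared Cramér distance between ν and its projection satisfies ℓ₂²(Π_C ν, ν) ≤ Σ_{i=1}^{K−1} (z_{i+1} − z_i)(F_ν(z_{i+1}) − F_ν(z_i))² ≤ max_{1 ≤ i < K} (z_{i+1} − z_i), where F_ν is the CDF of ν. -/

import Mathlib

open MeasureTheory Filter Set

noncomputable section

/-- The cumulative distribution function of a measure on ℝ. -/
def cdfFn (ν : Measure ℝ) (y : ℝ) : ℝ := (ν (Set.Iic y)).toReal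

/-- The Cramér distance `ℓ₂` between two measures on ℝ. -/
def cramerDist (ν₁ ν₂ : Measure ℝ) : ℝ :=
  Real.sqrt (∫ x, (cdfFn ν₁ x - cdfFn ν₂ x) ^ 2)

/-- The hat functions associated with the grid `z 0 < z 1 < ⋯ < z (K-1)`. -/
def hatFn (K : ℕ) (z : ℕ → ℝ) (i : ℕ) (x : ℝ) : ℝ :=
  if i = 0 ∧ x ≤ z 0 then 1
  else if i = K - 1 ∧ z (K - 1) ≤ x then 1
  else if i + 1 < K ∧ z i ≤ x ∧ x ≤ z (i + 1) then (z (i + 1) - x) / (z (i + 1) - z i)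
  else if 0 < i ∧ z (i - 1) ≤ x ∧ x ≤ z i then (x - z (i - 1)) / (z i - z (i - 1))
  else 0

/-- The Cramér projection onto the grid `z 0 < z 1 < ⋯ < z (K-1)`. -/
def cramerProj (K : ℕ) (z : ℕ → ℝ) (ν : Measure ℝ) : Measure ℝ :=
  ∑ i ∈ Finset.range K, (ENNReal.ofReal (∫ w, hatFn K z i w ∂ν)) • Measure.dirac (z i)

/-- The distributional Bellman operator. -/
def bellmanOp {X A : Type} [Fintype X] [Fintype A] [MeasurableSpace X] [MeasurableSpace A]
    (γ : ℝ) (p : X × A → Measure (ℝ × X)) (pol : X → Measure A)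
    (η : X × A → Measure ℝ) (xa : X × A) : Measure ℝ :=
  (p xa).bind (fun rx' => ∑ a' : A, (pol rx'.2 {a'}) • (η (rx'.2, a')).map (fun t => rx'.1 + γ * t))

/-- The supremum-Cramér metric between return distribution functions. -/
def supCramer {X A : Type} [Fintype X] [Fintype A] (η μ : X × A → Measure ℝ) : ℝ :=
  ⨆ xa : X × A, cramerDist (η xa) (μ xa)

/-- Square-integrable tails of the CDF. -/
def sqIntTails (ν : Measure ℝ) : Prop :=
  IntegrableOn (fun x => (cdfFn ν x) ^ 2) (Set.Iic 0) ∧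
  IntegrableOn (fun x => (1 - cdfFn ν x) ^ 2) (Set.Ici 0)

/-!
The projection moves no mass across a whole cell of the grid: for `z k ≤ x < z (k + 1)` the mass it
puts on `Iic x` contains everything `ν` has on `Iic (z k)` and nothing of what `ν` has beyond
`z (k + 1)`. So on that cell both CDFs take values in `[F_ν (z k), F_ν (z (k + 1))]`, while below
`z 0` and above `z (K - 1)` they agree; integrating the squared difference cell by cell gives the
first inequality. The increments of `F_ν` are nonnegative, so the sum of their squares is at most
the square of their sum, which telescopes; this gives the second.
-/

lemma sum_mul_sq_sub_le {R : Type*} [CommRing R] [LinearOrder R] [IsStrictOrderedRing R] {n : ℕ}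
    {d F : ℕ → R} {M : R} (hM : 0 ≤ M) (hd : ∀ i < n, d i ≤ M) (hF : ∀ i < n, F i ≤ F (i + 1)) :
    ∑ i ∈ Finset.range n, d i * (F (i + 1) - F i) ^ 2 ≤ M * (F n - F 0) ^ 2 := by
  calc ∑ i ∈ Finset.range n, d i * (F (i + 1) - F i) ^ 2
      ≤ ∑ i ∈ Finset.range n, M * (F (i + 1) - F i) ^ 2 :=
        Finset.sum_le_sum fun i hi ↦
          mul_le_mul_of_nonneg_right (hd i (Finset.mem_range.1 hi)) (sq_nonneg _)
    _ = M * ∑ i ∈ Finset.range n, (F (i + 1) - F i) ^ 2 := (Finset.mul_sum ..).symm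
    _ ≤ M * (∑ i ∈ Finset.range n, (F (i + 1) - F i)) ^ 2 :=
        mul_le_mul_of_nonneg_left (Finset.sum_sq_le_sq_sum_of_nonneg fun i hi ↦
          sub_nonneg.2 (hF i (Finset.mem_range.1 hi))) hM
    _ = M * (F n - F 0) ^ 2 := by rw [Finset.sum_range_sub]

lemma integral_le_sum_mul_of_le_on_Ico {n : ℕ} {z c : ℕ → ℝ} {f : ℝ → ℝ}
    (hz : ∀ k < n, z k ≤ z (k + 1)) (hf : 0 ≤ f) (hf_out : ∀ x ∉ Ico (z 0) (z n), f x = 0)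
    (hfc : ∀ k < n, ∀ x ∈ Ico (z k) (z (k + 1)), f x ≤ c k) :
    ∫ x, f x ≤ ∑ k ∈ Finset.range n, (z (k + 1) - z k) * c k := by
  let step (k : ℕ) : ℝ → ℝ := (Ico (z k) (z (k + 1))).indicator fun _ ↦ c k
  have step_nonneg (x : ℝ) : ∀ k ∈ Finset.range n, 0 ≤ step k x := fun k hk ↦
    indicator_apply_nonneg fun hx ↦ (hf x).trans (hfc k (Finset.mem_range.1 hk) x hx)
  have step_integrable : ∀ k ∈ Finset.range n, Integrable (step k) := fun k _ ↦
    (integrable_indicator_iff measurableSet_Ico).2 (integrableOn_const (by simp))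
  have le_sum_step (x : ℝ) : f x ≤ ∑ k ∈ Finset.range n, step k x := by
    by_cases hx : x ∈ Ico (z 0) (z n)
    · obtain ⟨k, hk, hxk⟩ := mem_iUnion₂.1 (Ico_subset_biUnion_Ico n z hx)
      calc f x ≤ c k := hfc k (Finset.mem_range.1 hk) x hxk
        _ = step k x := (indicator_of_mem hxk fun _ ↦ c k).symm
        _ ≤ ∑ k ∈ Finset.range n, step k x := Finset.single_le_sum (step_nonneg x) hk
    · exact (hf_out x hx).trans_le (Finset.sum_nonneg (step_nonneg x))
  calc ∫ x, f x ≤ ∫ x, ∑ k ∈ Finset.range n, step k x :=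
        integral_mono_of_nonneg (ae_of_all _ hf) (integrable_finsetSum _ step_integrable)
          (ae_of_all _ le_sum_step)
    _ = ∑ k ∈ Finset.range n, ∫ x, step k x := integral_finsetSum _ step_integrable
    _ = ∑ k ∈ Finset.range n, (z (k + 1) - z k) * c k := Finset.sum_congr rfl fun k hk ↦ by
        rw [integral_indicator_const _ measurableSet_Ico,
          Real.volume_real_Ico_of_le (hz k (Finset.mem_range.1 hk)), smul_eq_mul]

lemma cdfFn_mono (ν : Measure ℝ) [IsFiniteMeasure ν] : Monotone (cdfFn ν) :=
  fun _ _ hab ↦ measureReal_mono (Iic_subset_Iic.2 hab)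

lemma cdfFn_eq_integral_indicator (ν : Measure ℝ) (x : ℝ) :
    cdfFn ν x = ∫ w, (Iic x).indicator 1 w ∂ν :=
  (integral_indicator_one measurableSet_Iic).symm

lemma cdfFn_eq_zero_of_lt {ν : Measure ℝ} {a b x : ℝ} (hν : ν (Icc a b)ᶜ = 0) (hx : x < a) :
    cdfFn ν x = 0 := by
  have hsub : Iic x ⊆ (Icc a b)ᶜ := fun w hw hw' ↦ (hw'.1.trans hw).not_gt hx
  rw [cdfFn, measure_mono_null hsub hν, ENNReal.toReal_zero]

lemma cdfFn_eq_measureReal_univ_of_le {ν : Measure ℝ} {a b x : ℝ} (hν : ν (Icc a b)ᶜ = 0)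
    (hx : b ≤ x) : cdfFn ν x = ν.real univ := by
  have hsub : (Iic x)ᶜ ⊆ (Icc a b)ᶜ := compl_subset_compl.2 fun w hw ↦ hw.2.trans hx
  exact measureReal_congr (ae_eq_univ.2 (measure_mono_null hsub hν))

lemma hatFn_nonneg (K : ℕ) (z : ℕ → ℝ) (i : ℕ) (x : ℝ) : 0 ≤ hatFn K z i x := by
  unfold hatFn
  split_ifs
  · exact zero_le_one
  · exact zero_le_one
  · exact div_nonneg (by linarith) (by linarith)
  · exact div_nonneg (by linarith) (by linarith)
  · exact le_rfl

lemma hatFn_le_one (K : ℕ) (z : ℕ → ℝ) (i : ℕ) (x : ℝ) : hatFn K z i x ≤ 1 := by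
  unfold hatFn
  split_ifs
  · exact le_rfl
  · exact le_rfl
  · exact div_le_one_of_le₀ (by linarith) (by linarith)
  · exact div_le_one_of_le₀ (by linarith) (by linarith)
  · exact zero_le_one

lemma measurable_hatFn (K : ℕ) (z : ℕ → ℝ) (i : ℕ) : Measurable (hatFn K z i) := by
  refine .ite ((MeasurableSet.const _).inter measurableSet_Iic) measurable_const ?_
  refine .ite ((MeasurableSet.const _).inter measurableSet_Ici) measurable_const ?_
  refine .ite ((MeasurableSet.const _).inter measurableSet_Icc) (by fun_prop) ?_
  exact .ite ((MeasurableSet.const _).inter measurableSet_Icc) (by fun_prop) measurable_const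

lemma integrable_hatFn (K : ℕ) (z : ℕ → ℝ) (i : ℕ) (ν : Measure ℝ) [IsFiniteMeasure ν] :
    Integrable (hatFn K z i) ν :=
  .of_bound (measurable_hatFn K z i).aestronglyMeasurable 1 <| ae_of_all _ fun x ↦ by
    rw [Real.norm_of_nonneg (hatFn_nonneg K z i x)]
    exact hatFn_le_one K z i x

section HatFn

variable {K : ℕ} {z : ℕ → ℝ}

lemma hatFn_eq_zero_of_le {i j : ℕ} {x : ℝ} (hz : StrictMonoOn z (Iio K)) (hij : i < j)
    (hj : j < K) (hx : x ≤ z i) : hatFn K z j x = 0 := by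
  have hpred : z i ≤ z (j - 1) :=
    hz.monotoneOn (mem_Iio.2 (by omega)) (mem_Iio.2 (by omega)) (by omega)
  have hlt : z (j - 1) < z j := hz (mem_Iio.2 (by omega)) hj (by omega)
  unfold hatFn
  split_ifs with _ hlast
  · omega
  · linarith [hlast.1 ▸ hlast.2]
  · linarith
  · rw [show x = z (j - 1) by linarith, sub_self, zero_div]
  · rfl

lemma hatFn_eq_zero_of_ge {i j : ℕ} {x : ℝ} (hz : StrictMonoOn z (Iio K)) (hij : i < j)
    (hj : j < K) (hx : z j ≤ x) : hatFn K z i x = 0 := by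
  have hlt : z i < z (i + 1) := hz (mem_Iio.2 (by omega)) (mem_Iio.2 (by omega)) (by omega)
  have hsucc : z (i + 1) ≤ z j := hz.monotoneOn (mem_Iio.2 (by omega)) hj hij
  unfold hatFn
  split_ifs with hfirst
  · linarith [hfirst.1 ▸ hfirst.2]
  · omega
  · rw [show x = z (i + 1) by linarith, sub_self, zero_div]
  · linarith
  · rfl

lemma hatFn_eq_of_mem_Ico {k : ℕ} {x : ℝ} (hk : k + 1 < K) (hx : x ∈ Ico (z k) (z (k + 1))) :
    hatFn K z k x = (z (k + 1) - x) / (z (k + 1) - z k) := by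
  unfold hatFn
  split_ifs with hfirst _ hmem
  · obtain ⟨rfl, hx0⟩ := hfirst
    rw [le_antisymm hx0 hx.1, div_self (by linarith [hx.1, hx.2])]
  · omega
  · rfl
  all_goals exact absurd ⟨hk, hx.1, hx.2.le⟩ hmem

lemma hatFn_succ_eq_of_mem_Ico {k : ℕ} {x : ℝ} (hx : x ∈ Ico (z k) (z (k + 1))) :
    hatFn K z (k + 1) x = (x - z k) / (z (k + 1) - z k) := by
  have not_last : ¬ (k + 1 = K - 1 ∧ z (K - 1) ≤ x) := fun h ↦ hx.2.not_ge (h.1 ▸ h.2)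
  rw [hatFn, if_neg (by omega), if_neg not_last, if_neg fun h ↦ hx.2.not_ge h.2.1,
    Nat.add_sub_cancel, if_pos ⟨k.succ_pos, hx.1, hx.2.le⟩]

lemma sum_hatFn_eq_one (hK : 0 < K) (hz : StrictMonoOn z (Iio K)) (x : ℝ) :
    ∑ i ∈ Finset.range K, hatFn K z i x = 1 := by
  rcases lt_or_ge x (z 0) with hlow | hlow
  · rw [Finset.sum_eq_single_of_mem 0 (Finset.mem_range.2 hK) fun i hi hi0 ↦
      hatFn_eq_zero_of_le hz (Nat.pos_of_ne_zero hi0) (Finset.mem_range.1 hi) hlow.le]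
    exact if_pos ⟨rfl, hlow.le⟩
  rcases lt_or_ge x (z (K - 1)) with hhigh | hhigh
  · obtain ⟨k, hk, hxk⟩ := mem_iUnion₂.1 (Ico_subset_biUnion_Ico (K - 1) z ⟨hlow, hhigh⟩)
    have hk' : k + 1 < K := by have := Finset.mem_range.1 hk; omega
    have off_cell : ∀ i ∈ Finset.range K, i ≠ k ∧ i ≠ k + 1 → hatFn K z i x = 0 := by
      rintro i hi ⟨hik, hik'⟩
      rcases lt_or_gt_of_ne hik with hlt | hgt
      · exact hatFn_eq_zero_of_ge hz hlt (by omega) hxk.1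
      · exact hatFn_eq_zero_of_le hz (by omega) (Finset.mem_range.1 hi) hxk.2.le
    have hcell : z (k + 1) - z k ≠ 0 := by linarith [hxk.1, hxk.2]
    rw [Finset.sum_eq_add_of_mem k (k + 1) (Finset.mem_range.2 (by omega))
      (Finset.mem_range.2 hk') k.lt_succ_self.ne off_cell, hatFn_eq_of_mem_Ico hk' hxk,
      hatFn_succ_eq_of_mem_Ico hxk, ← add_div, sub_add_sub_cancel, div_self hcell]
  · rw [Finset.sum_eq_single_of_mem (K - 1) (Finset.mem_range.2 (by omega)) fun i hi hi' ↦
      hatFn_eq_zero_of_ge hz (by have := Finset.mem_range.1 hi; omega) (by omega) hhigh]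
    unfold hatFn
    split_ifs with _ hlast
    · rfl
    · rfl
    all_goals exact absurd ⟨rfl, hhigh⟩ hlast

lemma sum_hatFn_le_one {s : Finset ℕ} (hK : 0 < K) (hz : StrictMonoOn z (Iio K))
    (hs : s ⊆ Finset.range K) (x : ℝ) : ∑ i ∈ s, hatFn K z i x ≤ 1 :=
  (Finset.sum_le_sum_of_subset_of_nonneg hs fun i _ _ ↦ hatFn_nonneg K z i x).trans_eq
    (sum_hatFn_eq_one hK hz x)

end HatFn

lemma cdfFn_cramerProj (K : ℕ) (z : ℕ → ℝ) (ν : Measure ℝ) [IsFiniteMeasure ν] (x : ℝ) :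
    cdfFn (cramerProj K z ν) x = ∫ w, ∑ i ∈ Finset.range K with z i ≤ x, hatFn K z i w ∂ν := by
  have weight_nonneg (i : ℕ) : 0 ≤ ∫ w, hatFn K z i w ∂ν := integral_nonneg (hatFn_nonneg K z i)
  have atom_ne_top (i : ℕ) :
      (ENNReal.ofReal (∫ w, hatFn K z i w ∂ν) • Measure.dirac (z i)) (Iic x) ≠ ⊤ := by
    rw [Measure.smul_apply, smul_eq_mul]
    finiteness
  rw [integral_finsetSum _ fun i _ ↦ integrable_hatFn K z i ν, Finset.sum_filter, cdfFn,
    cramerProj, Measure.finsetSum_apply, ENNReal.toReal_sum fun i _ ↦ atom_ne_top i]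
  refine Finset.sum_congr rfl fun i _ ↦ ?_
  by_cases hi : z i ≤ x <;> simp [hi, weight_nonneg i]

section CramerProj

variable {K : ℕ} {z : ℕ → ℝ} {ν : Measure ℝ} [IsFiniteMeasure ν]

lemma cdfFn_le_cdfFn_cramerProj {k : ℕ} {x : ℝ} (hz : StrictMonoOn z (Iio K)) (hk : k < K)
    (hx : z k ≤ x) : cdfFn ν (z k) ≤ cdfFn (cramerProj K z ν) x := by
  rw [cdfFn_cramerProj, cdfFn_eq_integral_indicator]
  refine integral_mono ((integrable_const 1).indicator measurableSet_Iic)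
    (integrable_finsetSum _ fun i _ ↦ integrable_hatFn K z i ν) fun w ↦
      indicator_apply_le' (fun hw ↦ ?_) fun _ ↦ Finset.sum_nonneg fun i _ ↦ hatFn_nonneg K z i w
  have atom_le : ∀ i ∈ Finset.range K, hatFn K z i w ≠ 0 → z i ≤ x := by
    intro i hi hne
    have hik : i ≤ k := not_lt.1 fun hki ↦
      hne (hatFn_eq_zero_of_le hz hki (Finset.mem_range.1 hi) hw)
    exact (hz.monotoneOn (Finset.mem_range.1 hi) hk hik).trans hx
  rw [Finset.sum_filter_of_ne atom_le, sum_hatFn_eq_one (by omega) hz, Pi.one_apply]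

lemma cdfFn_cramerProj_le_cdfFn {k : ℕ} {x : ℝ} (hz : StrictMonoOn z (Iio K)) (hk : k < K)
    (hx : x < z k) : cdfFn (cramerProj K z ν) x ≤ cdfFn ν (z k) := by
  rw [cdfFn_cramerProj, cdfFn_eq_integral_indicator]
  refine integral_mono (integrable_finsetSum _ fun i _ ↦ integrable_hatFn K z i ν)
    ((integrable_const 1).indicator measurableSet_Iic) fun w ↦
      le_indicator_apply (fun _ ↦ sum_hatFn_le_one (by omega) hz (Finset.filter_subset _ _) w)
        fun hw ↦ (Finset.sum_eq_zero fun i hi ↦ ?_).le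
  obtain ⟨hiK, hix⟩ := Finset.mem_filter.1 hi
  have hik : i < k := (hz.lt_iff_lt (Finset.mem_range.1 hiK) hk).1 (hix.trans_lt hx)
  exact hatFn_eq_zero_of_ge hz hik hk (not_le.1 hw).le

lemma sq_cdfFn_cramerProj_sub_le {k : ℕ} {x : ℝ} (hz : StrictMonoOn z (Iio K)) (hk : k + 1 < K)
    (hx : x ∈ Ico (z k) (z (k + 1))) :
    (cdfFn (cramerProj K z ν) x - cdfFn ν x) ^ 2 ≤ (cdfFn ν (z (k + 1)) - cdfFn ν (z k)) ^ 2 := by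
  have proj_ge := cdfFn_le_cdfFn_cramerProj (ν := ν) hz (by omega) hx.1
  have proj_le := cdfFn_cramerProj_le_cdfFn (ν := ν) hz hk hx.2
  have cdf_ge := cdfFn_mono ν hx.1
  have cdf_le := cdfFn_mono ν hx.2.le
  exact sq_le_sq' (by linarith) (by linarith)

lemma cdfFn_cramerProj_eq_of_notMem_Ico {x : ℝ} (hK : 0 < K) (hz : StrictMonoOn z (Iio K))
    (hν : ν (Icc (z 0) (z (K - 1)))ᶜ = 0) (hx : x ∉ Ico (z 0) (z (K - 1))) :
    cdfFn (cramerProj K z ν) x = cdfFn ν x := by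
  rw [cdfFn_cramerProj]
  rcases lt_or_ge x (z 0) with hlow | hlow
  · have no_atom : ∀ i ∈ Finset.range K, ¬ z i ≤ x := fun i hi ↦ not_le.2 <|
      hlow.trans_le (hz.monotoneOn hK (Finset.mem_range.1 hi) i.zero_le)
    simp only [Finset.filter_false_of_mem no_atom, Finset.sum_empty, integral_zero,
      cdfFn_eq_zero_of_lt hν hlow]
  · have hhigh : z (K - 1) ≤ x := not_lt.1 fun h ↦ hx ⟨hlow, h⟩
    have all_atoms : ∀ i ∈ Finset.range K, z i ≤ x := fun i hi ↦
      (hz.monotoneOn (Finset.mem_range.1 hi) (Nat.sub_one_lt_of_lt hK)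
        (Nat.le_sub_one_of_lt (Finset.mem_range.1 hi))).trans hhigh
    simp only [Finset.filter_true_of_mem all_atoms, sum_hatFn_eq_one hK hz, integral_const,
      smul_eq_mul, mul_one, cdfFn_eq_measureReal_univ_of_le hν hhigh]

lemma cramerDist_cramerProj_sq_le (hK : 0 < K) (hz : StrictMonoOn z (Iio K))
    (hν : ν (Icc (z 0) (z (K - 1)))ᶜ = 0) :
    cramerDist (cramerProj K z ν) ν ^ 2 ≤ ∑ i ∈ Finset.range (K - 1),
      (z (i + 1) - z i) * (cdfFn ν (z (i + 1)) - cdfFn ν (z i)) ^ 2 := by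
  rw [cramerDist, Real.sq_sqrt (integral_nonneg fun _ ↦ sq_nonneg _)]
  refine integral_le_sum_mul_of_le_on_Ico (fun k hk ↦ ?_) (fun _ ↦ sq_nonneg _) (fun x hx ↦ ?_)
    fun k hk x hx ↦ sq_cdfFn_cramerProj_sub_le hz (by omega) hx
  · exact hz.monotoneOn (mem_Iio.2 (by omega)) (mem_Iio.2 (by omega)) k.le_succ
  · rw [cdfFn_cramerProj_eq_of_notMem_Ico hK hz hν hx, sub_self, zero_pow two_ne_zero]

end CramerProj

theorem cramerProj_sq_dist_bound_general
    (K : ℕ) (hK : 2 ≤ K) (z : ℕ → ℝ) (hz : ∀ i, i + 1 < K → z i < z (i + 1))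
    (ν : Measure ℝ) [IsFiniteMeasure ν] (hν : ν (Set.Icc (z 0) (z (K - 1)))ᶜ = 0) :
    (cramerDist (cramerProj K z ν) ν) ^ 2
        ≤ ∑ i ∈ Finset.range (K - 1),
            (z (i + 1) - z i) * (cdfFn ν (z (i + 1)) - cdfFn ν (z i)) ^ 2 ∧
    ∑ i ∈ Finset.range (K - 1),
        (z (i + 1) - z i) * (cdfFn ν (z (i + 1)) - cdfFn ν (z i)) ^ 2
      ≤ (⨆ i : Fin (K - 1), (z (i.1 + 1) - z i.1)) * ν.real univ ^ 2 := by
  have hz' : StrictMonoOn z (Iio K) := strictMonoOn_of_lt_add_one ordConnected_Iio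
    fun i _ _ hi ↦ hz i hi
  have mesh_nonneg : 0 ≤ ⨆ i : Fin (K - 1), (z (i.1 + 1) - z i.1) :=
    Real.iSup_nonneg fun i ↦ sub_nonneg.2 (hz i (by omega)).le
  have le_mesh : ∀ i < K - 1, z (i + 1) - z i ≤ ⨆ i : Fin (K - 1), (z (i.1 + 1) - z i.1) :=
    fun i hi ↦ le_ciSup (f := fun i : Fin (K - 1) ↦ z (i.1 + 1) - z i.1)
      (finite_range _).bddAbove ⟨i, hi⟩
  have cdf_step : ∀ i < K - 1, cdfFn ν (z i) ≤ cdfFn ν (z (i + 1)) :=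
    fun i hi ↦ cdfFn_mono ν (hz i (by omega)).le
  have total_increment : cdfFn ν (z (K - 1)) - cdfFn ν (z 0) ≤ ν.real univ :=
    (sub_le_self _ measureReal_nonneg).trans (measureReal_mono (subset_univ _))
  refine ⟨cramerDist_cramerProj_sq_le (by omega) hz' hν,
    (sum_mul_sq_sub_le (F := fun i ↦ cdfFn ν (z i)) mesh_nonneg le_mesh cdf_step).trans ?_⟩
  have endpoints : cdfFn ν (z 0) ≤ cdfFn ν (z (K - 1)) :=
    cdfFn_mono ν (hz'.monotoneOn (mem_Iio.2 (by omega)) (mem_Iio.2 (by omega)) (Nat.zero_le _))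
  exact mul_le_mul_of_nonneg_left
    (pow_le_pow_left₀ (sub_nonneg.2 endpoints) total_increment 2) mesh_nonneg

/-- Bound on the squared Cramér distance between a measure supported on
[z₁, z_K] and its Cramér projection. -/
theorem cramerProj_sq_dist_bound
    (K : ℕ) (hK : 2 ≤ K) (z : ℕ → ℝ) (hz : ∀ i, i + 1 < K → z i < z (i + 1))
    (ν : Measure ℝ) [IsProbabilityMeasure ν] (hν : ν (Set.Icc (z 0) (z (K - 1)))ᶜ = 0) :
    (cramerDist (cramerProj K z ν) ν) ^ 2
        ≤ ∑ i ∈ Finset.range (K - 1),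
            (z (i + 1) - z i) * (cdfFn ν (z (i + 1)) - cdfFn ν (z i)) ^ 2 ∧
    ∑ i ∈ Finset.range (K - 1),
        (z (i + 1) - z i) * (cdfFn ν (z (i + 1)) - cdfFn ν (z i)) ^ 2
      ≤ ⨆ i : Fin (K - 1), (z (i.1 + 1) - z i.1) := by
  simpa only [probReal_univ, one_pow, mul_one] using
    cramerProj_sq_dist_bound_general K hK z hz ν hν

end
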